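/- Assume that for every Borel probability measure μ on the countable product ℕ → X there exists a Borel-measurable map ζ : Ω → (ℕ → X) whose law is μ. Let d be a probability metric on R(X), let ξ ∈ R(X) and let (ξₙ)ₙ be a sequence in R(X). Then limsup_{n→∞} d̂(ξ, ξₙ) equals the minimum, over all ξ′ ∈ R(X) and all sequences (ξₙ′)ₙ in R(X) with L(ξ′) = L(ξ) and L(ξₙ′) = L(ξₙ) for all n, of limsup_{n→∞} d(ξ′, ξₙ′); that is, limsup_{n→∞} d̂(ξ, ξₙ) ≤ limsup_{n→∞} d(ξ′, ξₙ′) for every such choice of representatives, and there exist ξ′ ∈ R(X) and (ξₙ′)ₙ with L(ξ′) = L(ξ), L(ξₙ′) = L(ξₙ) for all n, and limsup_{n→∞} d(ξ′, ξₙ′) = limsup_{n→∞} d̂(ξ, ξₙ). -/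

import Mathlib

/-!
Choose for each `n` a coupling of the laws of `ξ` and `ξₙ` whose distance exceeds `d̂(ξ, ξₙ)` by
at most `1 / n`. All these couplings have the same first marginal. Given the first coordinate, the
second coordinate of each of them can be generated from one common uniform variable, so that they
are two-dimensional marginals of a single law on `X × (ℕ → X)`. A realization of this law consists
of representatives of `ξ` and all `ξₙ` that attain the infima simultaneously up to `1 / n`.
-/

open MeasureTheory Filter
open scoped ENNReal Topology

/-- The minimal probability metric associated with `d`:
`d̂(ξ, η) = inf { d(ξ′, η′) | ξ′, η′ measurable, L(ξ′) = L(ξ), L(η′) = L(η) }`. -/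
noncomputable def minPM {Ω X : Type*} [MeasurableSpace Ω] [MeasurableSpace X]
    (P : Measure Ω) (d : (Ω → X) → (Ω → X) → ℝ≥0∞) (ξ η : Ω → X) : ℝ≥0∞ :=
  ⨅ (ξ' : Ω → X) (η' : Ω → X) (_ : Measurable ξ') (_ : Measurable η')
    (_ : Measure.map ξ' P = Measure.map ξ P) (_ : Measure.map η' P = Measure.map η P),
    d ξ' η'

/-- Richness of the probability space `(Ω, P)` relative to `E`: every probability measure on `E` is
the law under `P` of some random variable. It makes constructions on the level of laws, such as
gluing couplings, available for random variables on `Ω`. -/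
def RealizesAllLaws {Ω : Type*} [MeasurableSpace Ω] (P : Measure Ω) (E : Type*)
    [MeasurableSpace E] : Prop :=
  ∀ μ : Measure E, IsProbabilityMeasure μ → ∃ ζ : Ω → E, Measurable ζ ∧ P.map ζ = μ

/-- Property (PM) of a probability metric: the value of `d` at two random variables is determined
by their joint law under `P`, so that `d` may be evaluated on any realization of a coupling. -/
def DependsOnlyOnJointLaw {Ω X : Type*} [MeasurableSpace Ω] [MeasurableSpace X]
    (P : Measure Ω) (d : (Ω → X) → (Ω → X) → ℝ≥0∞) : Prop :=
  ∀ ξ η ξ' η' : Ω → X, Measurable ξ → Measurable η → Measurable ξ' → Measurable η' →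
    P.map (fun ω => (ξ ω, η ω)) = P.map (fun ω => (ξ' ω, η' ω)) → d ξ η = d ξ' η'

section Gluing

variable {α : Type*} [MeasurableSpace α]

theorem exists_measurable_map_prod_unitInterval_eq {β : Type*} [MeasurableSpace β]
    [StandardBorelSpace β] [Nonempty β] (ρ : Measure (α × β)) [IsFiniteMeasure ρ] :
    ∃ f : α × unitInterval → β, Measurable f ∧
      (ρ.fst.prod volume).map (fun p => (p.1, f p)) = ρ := by
  obtain ⟨f, hf, hf_map⟩ :=
    ProbabilityTheory.Kernel.exists_measurable_map_eq_unitInterval ρ.condKernel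
  have hpair : Measurable fun p : α × unitInterval => (p.1, Function.uncurry f p) :=
    measurable_fst.prodMk hf
  refine ⟨Function.uncurry f, hf, ?_⟩
  rw [← ρ.disintegrate ρ.condKernel, Measure.fst_compProd]
  ext s hs
  rw [Measure.map_apply hpair hs, Measure.prod_apply (hpair hs), Measure.compProd_apply hs]
  refine lintegral_congr fun a => ?_
  rw [← hf_map a, Measure.map_apply hf.of_uncurry_left (measurable_prodMk_left hs)]
  rfl

variable {ι : Type*} {β : ι → Type*} [∀ i, MeasurableSpace (β i)] [∀ i, StandardBorelSpace (β i)]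

theorem exists_measure_map_fst_eval_eq [∀ i, Nonempty (β i)] {μ : Measure α}
    (ρ : ∀ i, Measure (α × β i)) [∀ i, IsFiniteMeasure (ρ i)] (hρ : ∀ i, (ρ i).fst = μ) :
    ∃ ν : Measure (α × ∀ i, β i), ∀ i, ν.map (fun p => (p.1, p.2 i)) = ρ i := by
  choose f hf hf_map using fun i => exists_measurable_map_prod_unitInterval_eq (ρ i)
  have hglue : Measurable fun p : α × unitInterval => (p.1, fun i => f i p) :=
    measurable_fst.prodMk (measurable_pi_lambda _ hf)
  refine ⟨(μ.prod volume).map fun p => (p.1, fun i => f i p), fun i => ?_⟩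
  rw [Measure.map_map (by fun_prop) hglue, ← hρ i]
  exact hf_map i

end Gluing

namespace RealizesAllLaws

variable {Ω : Type*} [MeasurableSpace Ω] {P : Measure Ω}

theorem of_rightInverse {E F : Type*} [MeasurableSpace E] [MeasurableSpace F]
    (hE : RealizesAllLaws P E) {φ : E → F} {ψ : F → E} (hφ : Measurable φ) (hψ : Measurable ψ)
    (h : Function.RightInverse ψ φ) : RealizesAllLaws P F := by
  intro μ _
  obtain ⟨ζ, hζ, hζ_map⟩ := hE (μ.map ψ) (Measure.isProbabilityMeasure_map hψ.aemeasurable)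
  refine ⟨φ ∘ ζ, hφ.comp hζ, ?_⟩
  rw [← Measure.map_map hφ hζ, hζ_map, Measure.map_map hφ hψ, h.comp_eq_id, Measure.map_id]

theorem prod_of_nat_pi {X : Type*} [MeasurableSpace X] (h : RealizesAllLaws P (ℕ → X)) :
    RealizesAllLaws P (X × (ℕ → X)) := by
  let cons : X × (ℕ → X) → ℕ → X := fun p n => Nat.casesOn n p.1 p.2
  have hcons : Measurable cons := measurable_pi_lambda _ fun
    | 0 => measurable_fst
    | n + 1 => (measurable_pi_apply n).comp measurable_snd
  exact h.of_rightInverse (φ := fun z => (z 0, fun n => z (n + 1))) (by fun_prop) hcons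
    fun _ => rfl

theorem exists_map_prodMk_eq {α ι : Type*} {β : ι → Type*} [MeasurableSpace α] [Nonempty ι]
    [∀ i, MeasurableSpace (β i)] [∀ i, StandardBorelSpace (β i)]
    (h : RealizesAllLaws P (α × ∀ i, β i)) {μ : Measure α} (ρ : ∀ i, Measure (α × β i))
    [∀ i, IsProbabilityMeasure (ρ i)] (hρ : ∀ i, (ρ i).fst = μ) :
    ∃ (ξ : Ω → α) (η : ∀ i, Ω → β i), Measurable ξ ∧ (∀ i, Measurable (η i)) ∧
      ∀ i, P.map (fun ω => (ξ ω, η i ω)) = ρ i := by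
  have hβ : ∀ i, Nonempty (β i) := fun i =>
    (nonempty_of_isProbabilityMeasure (ρ i)).map Prod.snd
  obtain ⟨ν, hν⟩ := exists_measure_map_fst_eval_eq ρ hρ
  have hν_prob : IsProbabilityMeasure ν := by
    obtain ⟨i⟩ := ‹Nonempty ι›
    have hν_map : IsProbabilityMeasure (ν.map fun p => (p.1, p.2 i)) := hν i ▸ inferInstance
    exact ν.isProbabilityMeasure_of_map fun p => (p.1, p.2 i)
  obtain ⟨ζ, hζ, hζ_map⟩ := h ν hν_prob
  refine ⟨fun ω => (ζ ω).1, fun i ω => (ζ ω).2 i, by fun_prop, by fun_prop, fun i => ?_⟩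
  rw [← hν i, ← hζ_map, Measure.map_map (by fun_prop) hζ]
  rfl

end RealizesAllLaws

section MinPM

variable {Ω X : Type*} [MeasurableSpace Ω] [MeasurableSpace X] {P : Measure Ω}
  {d : (Ω → X) → (Ω → X) → ℝ≥0∞} {ξ η ξ' η' : Ω → X}

theorem minPM_le (hξ' : Measurable ξ') (hη' : Measurable η') (hξ_law : P.map ξ' = P.map ξ)
    (hη_law : P.map η' = P.map η) : minPM P d ξ η ≤ d ξ' η' :=
  iInf₂_le_of_le ξ' η' <| iInf₂_le_of_le hξ' hη' <| iInf₂_le hξ_law hη_law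

theorem minPM_lt_iff {c : ℝ≥0∞} :
    minPM P d ξ η < c ↔ ∃ ξ' η' : Ω → X, Measurable ξ' ∧ Measurable η' ∧
      P.map ξ' = P.map ξ ∧ P.map η' = P.map η ∧ d ξ' η' < c := by
  simp only [minPM, iInf_lt_iff, exists_prop]

theorem exists_le_minPM_add (hξ : Measurable ξ) (hη : Measurable η) {ε : ℝ≥0∞} (hε : ε ≠ 0) :
    ∃ ξ' η' : Ω → X, Measurable ξ' ∧ Measurable η' ∧
      P.map ξ' = P.map ξ ∧ P.map η' = P.map η ∧ d ξ' η' ≤ minPM P d ξ η + ε := by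
  by_cases h_top : minPM P d ξ η = ∞
  · exact ⟨ξ, η, hξ, hη, rfl, rfl, by simp [h_top]⟩
  · obtain ⟨ξ', η', hξ', hη', hξ_law, hη_law, hlt⟩ :=
      minPM_lt_iff.mp (ENNReal.lt_add_right h_top hε)
    exact ⟨ξ', η', hξ', hη', hξ_law, hη_law, hlt.le⟩

theorem limsup_minPM_le {ι : Type*} {l : Filter ι} {ξs ξs' : ι → Ω → X} (hξ' : Measurable ξ')
    (hξs' : ∀ i, Measurable (ξs' i)) (hξ_law : P.map ξ' = P.map ξ)
    (hξs_law : ∀ i, P.map (ξs' i) = P.map (ξs i)) :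
    limsup (fun i => minPM P d ξ (ξs i)) l ≤ limsup (fun i => d ξ' (ξs' i)) l :=
  limsup_le_limsup <| .of_forall fun i => minPM_le hξ' (hξs' i) hξ_law (hξs_law i)

theorem exists_forall_le_minPM_add [StandardBorelSpace X] [IsProbabilityMeasure P]
    {ι : Type*} [Nonempty ι] (hrich : RealizesAllLaws P (X × (ι → X)))
    (hPM : DependsOnlyOnJointLaw P d) (hξ : Measurable ξ) {ξs : ι → Ω → X}
    (hξs : ∀ i, Measurable (ξs i)) {ε : ι → ℝ≥0∞} (hε : ∀ i, ε i ≠ 0) :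
    ∃ (ξ' : Ω → X) (ξs' : ι → Ω → X), Measurable ξ' ∧ (∀ i, Measurable (ξs' i)) ∧
      P.map ξ' = P.map ξ ∧ (∀ i, P.map (ξs' i) = P.map (ξs i)) ∧
      ∀ i, d ξ' (ξs' i) ≤ minPM P d ξ (ξs i) + ε i := by
  choose a b ha hb ha_law hb_law hab using fun i =>
    exists_le_minPM_add (P := P) (d := d) hξ (hξs i) (hε i)
  have hprob : ∀ i, IsProbabilityMeasure (P.map fun ω => (a i ω, b i ω)) := fun i =>
    Measure.isProbabilityMeasure_map ((ha i).prodMk (hb i)).aemeasurable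
  have hfst : ∀ i, (P.map fun ω => (a i ω, b i ω)).fst = P.map ξ := fun i => by
    rw [Measure.fst_map_prodMk (hb i), ha_law i]
  obtain ⟨ξ', ξs', hξ', hξs', hjoint⟩ := hrich.exists_map_prodMk_eq _ hfst
  refine ⟨ξ', ξs', hξ', hξs', ?_, fun i => ?_, fun i => ?_⟩
  · obtain ⟨i⟩ := ‹Nonempty ι›
    rw [← hfst i, ← hjoint i, Measure.fst_map_prodMk (hξs' i)]
  · rw [← Measure.snd_map_prodMk hξ', hjoint i, Measure.snd_map_prodMk (ha i), hb_law i]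
  · rw [hPM _ _ _ _ hξ' (hξs' i) (ha i) (hb i) (hjoint i)]
    exact hab i

theorem limsup_minPM_eq_min_limsup_general [StandardBorelSpace X] [IsProbabilityMeasure P]
    (hrich : RealizesAllLaws P (ℕ → X)) (hPM : DependsOnlyOnJointLaw P d)
    (hξ : Measurable ξ) {ξs : ℕ → Ω → X} (hξs : ∀ n, Measurable (ξs n)) :
    (∀ (ξ' : Ω → X) (ξs' : ℕ → Ω → X), Measurable ξ' → (∀ n, Measurable (ξs' n)) →
      P.map ξ' = P.map ξ → (∀ n, P.map (ξs' n) = P.map (ξs n)) →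
      limsup (fun n => minPM P d ξ (ξs n)) atTop ≤ limsup (fun n => d ξ' (ξs' n)) atTop) ∧
    ∃ (ξ' : Ω → X) (ξs' : ℕ → Ω → X), Measurable ξ' ∧ (∀ n, Measurable (ξs' n)) ∧
      P.map ξ' = P.map ξ ∧ (∀ n, P.map (ξs' n) = P.map (ξs n)) ∧
      limsup (fun n => d ξ' (ξs' n)) atTop = limsup (fun n => minPM P d ξ (ξs n)) atTop := by
  refine ⟨fun _ _ => limsup_minPM_le, ?_⟩
  obtain ⟨ξ', ξs', hξ', hξs', hξ_law, hξs_law, hle⟩ :=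
    exists_forall_le_minPM_add hrich.prod_of_nat_pi hPM hξ hξs
      (ε := fun n => (n : ℝ≥0∞)⁻¹) fun n => ENNReal.inv_ne_zero.mpr (ENNReal.natCast_ne_top n)
  refine ⟨ξ', ξs', hξ', hξs', hξ_law, hξs_law,
    le_antisymm ?_ (limsup_minPM_le hξ' hξs' hξ_law hξs_law)⟩
  calc limsup (fun n => d ξ' (ξs' n)) atTop
      ≤ limsup ((fun n => minPM P d ξ (ξs n)) + fun n : ℕ => (n : ℝ≥0∞)⁻¹) atTop :=
        limsup_le_limsup (.of_forall hle)
    _ = limsup (fun n => minPM P d ξ (ξs n)) atTop :=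
        ENNReal.limsup_add_of_right_tendsto_zero ENNReal.tendsto_inv_nat_nhds_zero _

end MinPM

/-- Assume every Borel probability measure on `ℕ → X` is the law of
some random variable. Let `d` be a probability metric on `R(X)`, `ξ ∈ R(X)` and
`(ξₙ)ₙ` a sequence in `R(X)`. Then `limsup_{n} d̂(ξ, ξₙ)` is the minimum, over all
representatives `ξ′, (ξₙ′)ₙ` with `L(ξ′) = L(ξ)` and `L(ξₙ′) = L(ξₙ)`, of
`limsup_{n} d(ξ′, ξₙ′)`: it is a lower bound, and the bound is attained. -/
theorem limsup_minPM_eq_min_limsup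
    {Ω X : Type*} [MeasurableSpace Ω]
    [TopologicalSpace X] [PolishSpace X] [MeasurableSpace X] [BorelSpace X]
    (P : Measure Ω) [IsProbabilityMeasure P]
    (hrich : ∀ μ : Measure (ℕ → X), IsProbabilityMeasure μ →
      ∃ ζ : Ω → ℕ → X, Measurable ζ ∧ Measure.map ζ P = μ)
    (d : (Ω → X) → (Ω → X) → ℝ≥0∞)
    (hrefl : ∀ ξ : Ω → X, Measurable ξ → d ξ ξ = 0)
    (hsymm : ∀ ξ η : Ω → X, Measurable ξ → Measurable η → d ξ η = d η ξ)
    (htri : ∀ ξ η ζ : Ω → X, Measurable ξ → Measurable η → Measurable ζ →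
      d ξ η ≤ d ξ ζ + d ζ η)
    (hPM : ∀ ξ η ξ' η' : Ω → X, Measurable ξ → Measurable η →
      Measurable ξ' → Measurable η' →
      Measure.map (fun ω => (ξ ω, η ω)) P = Measure.map (fun ω => (ξ' ω, η' ω)) P →
      d ξ η = d ξ' η')
    (ξ : Ω → X) (hξ : Measurable ξ)
    (ξs : ℕ → Ω → X) (hξs : ∀ n, Measurable (ξs n)) :
    (∀ (ξ' : Ω → X) (ξs' : ℕ → Ω → X), Measurable ξ' → (∀ n, Measurable (ξs' n)) →
      Measure.map ξ' P = Measure.map ξ P →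
      (∀ n, Measure.map (ξs' n) P = Measure.map (ξs n) P) →
      Filter.limsup (fun n => minPM P d ξ (ξs n)) atTop ≤
        Filter.limsup (fun n => d ξ' (ξs' n)) atTop) ∧
    (∃ (ξ' : Ω → X) (ξs' : ℕ → Ω → X), Measurable ξ' ∧ (∀ n, Measurable (ξs' n)) ∧
      Measure.map ξ' P = Measure.map ξ P ∧
      (∀ n, Measure.map (ξs' n) P = Measure.map (ξs n) P) ∧
      Filter.limsup (fun n => d ξ' (ξs' n)) atTop =
        Filter.limsup (fun n => minPM P d ξ (ξs n)) atTop) := by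
  exact limsup_minPM_eq_min_limsup_general hrich hPM hξ hξs
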